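/- Let d ≥ 1, let N ≥ 1 be an integer, let c₁ > 0, and let Λ ⊂ ℝ^d be a full-rank lattice with a generating matrix T satisfying |det(T)| = 1/N. If the shortest nonzero vector of Λ satisfies λ₁(Λ) ≥ c₁ · N^{−1/d}, then the mesh ratio of Λ satisfies ρ(Λ) ≤ √d · C_d / c₁^d, where C_d = 2^d Γ(1+d/2)/π^{d/2}. In particular, this bound is independent of N. -/

import Mathlib

open scoped RealInnerProductSpace

noncomputable section

/-- `ℝ^d` with the Euclidean norm. -/
abbrev Euc (d : ℕ) := EuclideanSpace ℝ (Fin d)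

/-- `Λ` is the full-rank lattice generated by the columns of the invertible matrix `T`. -/
def IsLatticeOf {d : ℕ} (Λ : Set (Euc d)) (T : Matrix (Fin d) (Fin d) ℝ) : Prop :=
  IsUnit T.det ∧ Λ = { v : Euc d | ∃ k : Fin d → ℤ, ∀ i, v i = ∑ j, T i j * (k j : ℝ) }

/-- Covering radius of `Λ` with respect to all of `ℝ^d`:
`h(Λ) = sup_{x ∈ ℝ^d} inf_{y ∈ Λ} ‖x - y‖₂`. -/
def covRad {d : ℕ} (Λ : Set (Euc d)) : ℝ :=
  ⨆ x : Euc d, sInf (Set.image (dist x) Λ)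

/-- Separation radius of a lattice: half the length of the shortest nonzero vector. -/
def sepRad {d : ℕ} (Λ : Set (Euc d)) : ℝ :=
  (1 / 2) * sInf (Set.image norm (Λ \ {0}))

/-- Mesh ratio `ρ(Λ) = h(Λ)/q(Λ)` of a lattice. -/
def meshRatio {d : ℕ} (Λ : Set (Euc d)) : ℝ := covRad Λ / sepRad Λ

/-- The `j`-th successive minimum of `Λ` with respect to the Euclidean unit ball:
`λ_j(Λ) = inf { r > 0 : dim span(Λ ∩ rB_d) ≥ j }`. -/
def succMin {d : ℕ} (Λ : Set (Euc d)) (j : ℕ) : ℝ :=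
  sInf { r : ℝ | 0 < r ∧
    j ≤ Module.finrank ℝ (Submodule.span ℝ (Λ ∩ Metric.closedBall (0 : Euc d) r)) }

/-- The dual lattice `Λ⊥ = { y : x·y ∈ ℤ for all x ∈ Λ }`. -/
def dualLat {d : ℕ} (Λ : Set (Euc d)) : Set (Euc d) :=
  { y | ∀ x ∈ Λ, ∃ n : ℤ, ⟪x, y⟫ = (n : ℝ) }

/-- The closed unit cube `[0,1]^d`. -/
def unitCube (d : ℕ) : Set (Euc d) := { x | ∀ i, 0 ≤ x i ∧ x i ≤ 1 }

/-- The half-open unit cube `[0,1)^d`. -/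
def halfOpenCube (d : ℕ) : Set (Euc d) := { x | ∀ i, 0 ≤ x i ∧ x i < 1 }

/-- Covering radius of a point set `P` with respect to the unit cube `[0,1]^d`. -/
def covRadCube {d : ℕ} (P : Set (Euc d)) : ℝ :=
  ⨆ x : unitCube d, sInf (Set.image (dist (x : Euc d)) P)

/-- Separation radius of a point set:
`q(P) = (1/2) min_{x ≠ y ∈ P} ‖x - y‖₂`. -/
def sepRadSet {d : ℕ} (P : Set (Euc d)) : ℝ :=
  (1 / 2) * sInf { r : ℝ | ∃ x ∈ P, ∃ y ∈ P, x ≠ y ∧ r = dist x y }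

/-- Mesh ratio `ρ(P) = h(P)/q(P)` of a point set with respect to `[0,1]^d`. -/
def meshRatioSet {d : ℕ} (P : Set (Euc d)) : ℝ := covRadCube P / sepRadSet P

/-- The constant `C_d = 2^d Γ(1+d/2) / π^{d/2}`. -/
def Cd (d : ℕ) : ℝ := 2 ^ d * Real.Gamma (1 + (d : ℝ) / 2) / Real.pi ^ ((d : ℝ) / 2)

/-- Randomized-rounding bound, derandomized. -/
theorem round_aux {E ι : Type*} [NormedAddCommGroup E] [InnerProductSpace ℝ E]
    (v : ι → E) (a : ι → ℝ) (R : ℝ) (hv : ∀ i, ‖v i‖ ≤ R) (s : Finset ι) :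
    ∃ k : ι → ℤ, ‖∑ i ∈ s, (a i - k i) • v i‖ ^ 2 ≤ s.card / 4 * R ^ 2 := by
  classical
  induction s using Finset.induction_on with
  | empty => exact ⟨0, by simp⟩
  | insert j s hj ih =>
    obtain ⟨k, hk⟩ := ih
    set e := ∑ i ∈ s, (a i - k i) • v i with he
    have key : ∃ n : ℤ, ‖(a j - n) • v j + e‖ ^ 2 ≤ ‖e‖ ^ 2 + R ^ 2 / 4 := by
      by_contra! hcon
      have h1 := hcon ⌊a j⌋
      have h2 := hcon (⌊a j⌋ + 1)
      set f := a j - ⌊a j⌋ with hf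
      have hf0 : 0 ≤ f := by have := Int.floor_le (a j); linarith
      have hf1 : f < 1 := by have := Int.lt_floor_add_one (a j); linarith
      have e2 : a j - ((⌊a j⌋ + 1 : ℤ) : ℝ) = f - 1 := by push_cast; ring
      rw [e2] at h2
      rw [norm_add_sq_real, real_inner_smul_left, norm_smul, mul_pow, Real.norm_eq_abs,
        sq_abs] at h1 h2
      have hR : ‖v j‖ ^ 2 ≤ R ^ 2 := by
        have := hv j
        have := norm_nonneg (v j)
        gcongr
      have h3 : f * (1 - f) * ‖v j‖ ^ 2 ≤ 1 / 4 * R ^ 2 := by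
        apply mul_le_mul _ hR (by positivity) (by norm_num)
        nlinarith [sq_nonneg (f - 1 / 2)]
      generalize ‖v j‖ ^ 2 = V at *
      generalize inner ℝ (v j) e = I at *
      have h1' := mul_lt_mul_of_pos_left h1 (by linarith : 0 < 1 - f)
      have h2' := mul_le_mul_of_nonneg_left h2.le hf0
      nlinarith
    obtain ⟨n, hn⟩ := key
    refine ⟨Function.update k j n, ?_⟩
    rw [Finset.sum_insert hj, Finset.card_insert_of_notMem hj]
    have : ∑ i ∈ s, (a i - (Function.update k j n i : ℤ)) • v i = e := by
      rw [he]
      refine Finset.sum_congr rfl fun i hi => ?_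
      rw [Function.update_of_ne (by rintro rfl; exact hj hi)]
    rw [this, Function.update_self]
    push_cast
    linarith

theorem lattice_basis {d : ℕ} {Λ : Set (Euc d)} {T : Matrix (Fin d) (Fin d) ℝ}
    (hT : IsLatticeOf Λ T) : ∃ b : Module.Basis (Fin d) ℝ (Euc d),
      Λ = (Submodule.span ℤ (Set.range b) : Set (Euc d)) ∧
      MeasureTheory.volume (ZSpan.fundamentalDomain b) = ENNReal.ofReal |T.det| := by
  obtain ⟨hu, hΛ⟩ := hT
  let b₀ := (EuclideanSpace.basisFun (Fin d) ℝ)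
  let c : Fin d → Euc d := fun j => WithLp.toLp 2 (fun i => T i j)
  have hdet : b₀.toBasis.det c = T.det := by
    rw [Module.Basis.det_apply]
    congr 1
  have hb := (Module.Basis.is_basis_iff_det b₀.toBasis (v := c)).2 (by rw [hdet]; exact hu)
  let b := Module.Basis.mk hb.1 hb.2.ge
  have hbc : ⇑b = c := Module.Basis.coe_mk _ _
  refine ⟨b, ?_, ?_⟩
  · rw [hΛ, hbc]
    ext x
    simp only [Set.mem_setOf_eq, SetLike.mem_coe, Submodule.mem_span_range_iff_exists_fun]
    refine exists_congr fun k => ?_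
    constructor
    · intro h
      ext i
      simp [h, c, mul_comm]
    · rintro rfl i
      simp [c, mul_comm]
  · rw [ZSpan.measure_fundamentalDomain b _ b₀.toBasis, hbc, hdet,
      MeasureTheory.measure_congr (ZSpan.fundamentalDomain_ae_parallelepiped _ _)]
    have := b₀.volume_parallelepiped
    simp only [OrthonormalBasis.coe_toBasis]
    rw [this, mul_one]

/-- If the lattice vectors of length at most `r` do not span, the ellipsoid argument bounds `r`. -/
theorem mink_aux {d : ℕ} (hd : 1 ≤ d) {Λ : Set (Euc d)} {T : Matrix (Fin d) (Fin d) ℝ}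
    (hT : IsLatticeOf Λ T) (m r : ℝ) (hm : 0 < m) (hr : 0 < r)
    (hmin : ∀ x ∈ Λ, x ≠ 0 → m ≤ ‖x‖)
    (hspan : Submodule.span ℝ (Λ ∩ Metric.closedBall (0 : Euc d) r) ≠ ⊤) :
    m ^ (d - 1) * r ≤ Cd d * |T.det| := by
  obtain ⟨b, hΛ, hvol⟩ := lattice_basis hT
  by_contra! hlt
  obtain ⟨u, hu, hu1⟩ : ∃ u : Euc d,
      (∀ x ∈ Λ ∩ Metric.closedBall (0 : Euc d) r, inner ℝ u x = 0) ∧ ‖u‖ = 1 := by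
    have h1 : (Submodule.span ℝ (Λ ∩ Metric.closedBall (0 : Euc d) r))ᗮ ≠ ⊥ := by
      rwa [Ne, Submodule.orthogonal_eq_bot_iff]
    obtain ⟨w, hw, hw0⟩ := Submodule.exists_mem_ne_zero_of_ne_bot h1
    refine ⟨(‖w‖⁻¹ : ℝ) • w, fun x hx => ?_, ?_⟩
    · rw [real_inner_smul_left, Submodule.inner_left_of_mem_orthogonal
        (Submodule.subset_span hx) hw, mul_zero]
    · rw [norm_smul, norm_inv, norm_norm, inv_mul_cancel₀ (norm_ne_zero_iff.2 hw0)]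
  let A : Euc d →ₗ[ℝ] Euc d :=
    m • LinearMap.transvection ((r / m - 1) • (innerSL ℝ u : Euc d →ₗ[ℝ] ℝ)) u
  have hA : ∀ y, A y = m • y + ((r - m) * inner ℝ u y) • u := by
    intro y
    simp only [A, LinearMap.smul_apply, LinearMap.transvection.apply, smul_add, smul_smul]
    congr 2
    simp
    field_simp
  have hAdet : LinearMap.det A = m ^ (d - 1) * r := by
    simp only [A, LinearMap.det_smul, LinearMap.transvection.det]
    simp [hu1]
    obtain ⟨e, rfl⟩ : ∃ e, d = e + 1 := ⟨d - 1, by omega⟩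
    simp [pow_succ]
    field_simp
  have hC : 0 < Cd d := by
    unfold Cd
    have := Real.Gamma_pos_of_pos (s := 1 + (d : ℝ) / 2) (by positivity)
    positivity
  haveI : Nonempty (Fin d) := ⟨⟨0, hd⟩⟩
  have hκ : √Real.pi ^ d / Real.Gamma ((d : ℝ) / 2 + 1) = 2 ^ d / Cd d := by
    have := Real.Gamma_pos_of_pos (s := 1 + (d : ℝ) / 2) (by positivity)
    have h2 : √Real.pi ^ d = Real.pi ^ ((d : ℝ) / 2) := by
      rw [Real.sqrt_eq_rpow, ← Real.rpow_natCast, ← Real.rpow_mul Real.pi_pos.le]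
      congr 1; ring
    rw [h2, Cd, add_comm ((d : ℝ) / 2)]
    have : 0 < Real.pi ^ ((d : ℝ) / 2) := by positivity
    field_simp
  have hmeas : MeasureTheory.volume (ZSpan.fundamentalDomain b) * 2 ^ Module.finrank ℝ (Euc d) <
      MeasureTheory.volume (A '' Metric.ball 0 1) := by
    rw [MeasureTheory.Measure.addHaar_image_linearMap, EuclideanSpace.volume_ball, hvol, hAdet]
    simp only [Fintype.card_fin, finrank_euclideanSpace, ENNReal.ofReal_one, one_pow, one_mul]
    rw [hκ, abs_of_pos (show 0 < m ^ (d - 1) * r by positivity), ← ENNReal.ofReal_mul (by positivity),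
      show (2 : ENNReal) = ENNReal.ofReal 2 by simp, ← ENNReal.ofReal_pow (by norm_num),
      ← ENNReal.ofReal_mul (by positivity), ENNReal.ofReal_lt_ofReal_iff (by positivity)]
    rw [mul_div_assoc', lt_div_iff₀ hC]
    have : (0 : ℝ) < 2 ^ d := by positivity
    nlinarith
  have : Countable (Submodule.span ℤ (Set.range b)).toAddSubgroup :=
    inferInstanceAs (Countable (Submodule.span ℤ (Set.range b)))
  obtain ⟨x, hx0, hxs⟩ :=
    MeasureTheory.exists_ne_zero_mem_lattice_of_measure_mul_two_pow_lt_measure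
      (L := (Submodule.span ℤ (Set.range b)).toAddSubgroup)
      (ZSpan.isAddFundamentalDomain' b MeasureTheory.volume)
      (s := A '' Metric.ball 0 1)
      (by
        rintro _ ⟨y, hy, rfl⟩
        exact ⟨-y, by simpa using hy, by simp⟩)
      ((convex_ball 0 1).linear_image A) hmeas
  obtain ⟨x, hxL⟩ := x
  have hxΛ : x ∈ Λ := by rw [hΛ]; exact hxL
  have hx0' : x ≠ 0 := fun h => hx0 (by ext1; exact h)
  obtain ⟨y, hy, hyx⟩ := hxs
  change A y = x at hyx
  have hy1 : ‖y‖ < 1 := by simpa using hy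
  have huu : inner ℝ u u = (1 : ℝ) := by rw [real_inner_self_eq_norm_sq, hu1]; norm_num
  have hnorm : ‖x‖ ^ 2 = m ^ 2 * (‖y‖ ^ 2 - inner ℝ u y ^ 2) + r ^ 2 * inner ℝ u y ^ 2 := by
    rw [← hyx, hA, norm_add_sq_real, norm_smul, norm_smul, real_inner_smul_left,
      real_inner_smul_right, mul_pow, mul_pow, hu1, Real.norm_eq_abs, Real.norm_eq_abs, sq_abs,
      sq_abs, real_inner_comm u y]
    ring
  have hcs : inner ℝ u y ^ 2 ≤ ‖y‖ ^ 2 := by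
    have := abs_real_inner_le_norm u y
    rw [hu1, one_mul] at this
    rw [← sq_abs]
    gcongr
  have hmx := hmin x hxΛ hx0'
  have hy2 : ‖y‖ ^ 2 < 1 := by
    have := norm_nonneg y
    nlinarith
  have hmx2 : m ^ 2 ≤ ‖x‖ ^ 2 := by gcongr
  have hip : inner ℝ u x = r * inner ℝ u y := by
    rw [← hyx, hA, inner_add_right, real_inner_smul_right, real_inner_smul_right, huu]
    ring
  have hm2 : 0 < m ^ 2 := by positivity
  have hr2 : 0 < r ^ 2 := by positivity
  by_cases hxr : ‖x‖ ≤ r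
  · have h0 := hu x ⟨hxΛ, by simpa using hxr⟩
    rw [hip] at h0
    have h0' : inner ℝ u y = (0 : ℝ) := by
      rcases mul_eq_zero.1 h0 with h | h
      · exact absurd h hr.ne'
      · exact h
    rw [h0'] at hnorm
    nlinarith
  · push Not at hxr
    have hrx2 : r ^ 2 < ‖x‖ ^ 2 := by gcongr
    generalize ‖y‖ ^ 2 = Y at *
    have hI : 0 ≤ inner ℝ u y ^ 2 := sq_nonneg _
    generalize inner ℝ u y ^ 2 = I at *
    generalize ‖x‖ ^ 2 = X at *
    have : m ^ 2 * (Y - I) + r ^ 2 * I ≤ X * (Y - I) + X * I := by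
      gcongr
    nlinarith

theorem cov_aux {d : ℕ} {Λ : Set (Euc d)} {T : Matrix (Fin d) (Fin d) ℝ}
    (hT : IsLatticeOf Λ T) (r : ℝ) (hr : 0 < r)
    (hspan : Submodule.span ℝ (Λ ∩ Metric.closedBall (0 : Euc d) r) = ⊤) :
    covRad Λ ≤ Real.sqrt d / 2 * r := by
  obtain ⟨b, hΛ, -⟩ := lattice_basis hT
  refine ciSup_le fun x => ?_
  obtain ⟨f, hf, hfs, -⟩ := Submodule.exists_fun_fin_finrank_span_eq ℝ
    (Λ ∩ Metric.closedBall (0 : Euc d) r)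
  have hx : x ∈ Submodule.span ℝ (Set.range f) := by rw [hfs, hspan]; trivial
  obtain ⟨a, ha⟩ := (Submodule.mem_span_range_iff_exists_fun ℝ).1 hx
  obtain ⟨k, hk⟩ := round_aux f a r (fun i => by simpa using (hf i).2) Finset.univ
  have hcard : (Finset.univ : Finset (Fin (Module.finrank ℝ
      (Submodule.span ℝ (Λ ∩ Metric.closedBall (0 : Euc d) r))))).card = d := by
    rw [Finset.card_fin, hspan, finrank_top, finrank_euclideanSpace, Fintype.card_fin]
  rw [hcard] at hk
  have hmem : ∀ y, y ∈ Λ ↔ y ∈ Submodule.span ℤ (Set.range b) := fun y => by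
    rw [hΛ, SetLike.mem_coe]
  have hy : ∑ i, (k i) • f i ∈ Λ := by
    rw [hmem]
    refine Submodule.sum_mem _ fun i _ => Submodule.smul_mem _ _ ?_
    exact (hmem _).1 (hf i).1
  have hdist : dist x (∑ i, (k i) • f i) ≤ Real.sqrt d / 2 * r := by
    rw [dist_eq_norm]
    apply le_of_sq_le_sq _ (by positivity)
    rw [mul_pow, div_pow, Real.sq_sqrt (by positivity)]
    have : x - ∑ i, (k i) • f i = ∑ i, (a i - k i) • f i := by
      rw [← ha, ← Finset.sum_sub_distrib]
      refine Finset.sum_congr rfl fun i _ => ?_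
      rw [sub_smul, Int.cast_smul_eq_zsmul]
    rw [this]
    linarith
  refine le_trans (csInf_le ⟨0, ?_⟩ ⟨_, hy, rfl⟩) hdist
  rintro _ ⟨y, -, rfl⟩
  exact dist_nonneg

theorem stmt8 {d : ℕ} (hd : 1 ≤ d) (N : ℕ) (hN : 1 ≤ N) (c₁ : ℝ) (hc : 0 < c₁)
    (Λ : Set (Euc d)) (T : Matrix (Fin d) (Fin d) ℝ) (hT : IsLatticeOf Λ T)
    (hdet : |T.det| = 1 / N)
    (hlam : succMin Λ 1 ≥ c₁ * (N : ℝ) ^ (-(1 : ℝ) / d)) :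
    meshRatio Λ ≤ Real.sqrt d * Cd d / c₁ ^ d := by
  have hmin0 : ∀ x ∈ Λ, x ≠ 0 → c₁ * (N : ℝ) ^ (-(1 : ℝ) / d) ≤ ‖x‖ := by
    intro x hx hx0
    refine le_trans hlam (csInf_le ⟨0, fun r hr => hr.1.le⟩ ⟨norm_pos_iff.2 hx0, ?_⟩)
    rw [Nat.one_le_iff_ne_zero, Ne, Submodule.finrank_eq_zero, Submodule.span_eq_bot]
    intro h
    exact hx0 (h x ⟨hx, by simp⟩)
  have hNpos : (0 : ℝ) < N := by exact_mod_cast hN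
  have hdpos : (0 : ℝ) < d := by exact_mod_cast hd
  set l := c₁ * (N : ℝ) ^ (-(1 : ℝ) / d) with hl
  have hlpos : 0 < l := by positivity
  have hne : (Set.image norm (Λ \ {0})).Nonempty := by
    obtain ⟨b, hΛ, -⟩ := lattice_basis hT
    refine ⟨_, b ⟨0, hd⟩, ⟨?_, b.ne_zero _⟩, rfl⟩
    rw [hΛ]
    exact Submodule.subset_span ⟨_, rfl⟩
  set m := sInf (Set.image norm (Λ \ {0})) with hm
  have hlm : l ≤ m := by
    refine le_csInf hne ?_
    rintro _ ⟨x, ⟨hx, hx0⟩, rfl⟩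
    exact hmin0 x hx hx0
  have hmpos : 0 < m := hlpos.trans_le hlm
  have hmin : ∀ x ∈ Λ, x ≠ 0 → m ≤ ‖x‖ := by
    intro x hx hx0
    refine csInf_le ⟨0, ?_⟩ ⟨x, ⟨hx, hx0⟩, rfl⟩
    rintro _ ⟨y, -, rfl⟩
    exact norm_nonneg y
  have hC : 0 < Cd d := by
    unfold Cd
    have := Real.Gamma_pos_of_pos (s := 1 + (d : ℝ) / 2) (by positivity)
    positivity
  have hspos : 0 < Real.sqrt d := Real.sqrt_pos.2 hdpos
  set M := Cd d * (1 / N) / m ^ (d - 1) with hM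
  have hMpos : 0 < M := by positivity
  have hcov : covRad Λ ≤ Real.sqrt d / 2 * M := by
    have h1 : ∀ r, M < r → covRad Λ ≤ Real.sqrt d / 2 * r := by
      intro r hr
      have hr0 := hMpos.trans hr
      refine cov_aux hT r hr0 ?_
      by_contra hspan
      have h2 := mink_aux hd hT m r hmpos hr0 hmin hspan
      rw [hM, div_lt_iff₀ (by positivity)] at hr
      rw [hdet] at h2
      linarith
    rw [← div_le_iff₀' (by positivity)]
    refine le_of_forall_gt_imp_ge_of_dense fun r hr => ?_
    rw [div_le_iff₀' (by positivity)]
    exact h1 r hr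
  have hld : l ^ d = c₁ ^ d / N := by
    rw [hl, mul_pow, ← Real.rpow_natCast ((N : ℝ) ^ (-(1 : ℝ) / d)), ← Real.rpow_mul hNpos.le,
      div_mul_cancel₀ _ hdpos.ne', Real.rpow_neg_one, div_eq_mul_inv]
  have hmd : c₁ ^ d / N ≤ m ^ d := by rw [← hld]; gcongr
  have hmsplit : m ^ d = m ^ (d - 1) * m := by
    rw [← pow_succ, Nat.sub_add_cancel hd]
  calc meshRatio Λ = covRad Λ / (1 / 2 * m) := rfl
    _ ≤ (Real.sqrt d / 2 * M) / (1 / 2 * m) := by gcongr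
    _ = Real.sqrt d * Cd d * (1 / N) / m ^ d := by
      rw [hM, hmsplit]; field_simp
    _ ≤ Real.sqrt d * Cd d * (1 / N) / (c₁ ^ d / N) := by gcongr
    _ = Real.sqrt d * Cd d / c₁ ^ d := by field_simp

end
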